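/- arXiv:1212.2080 — 2 statements merged into one kernel-verified Lean document; each statement's English description precedes it below -/
import Mathlib

section
/- Every convex subset C of a tropical oriented matroid M is connected: any two types A, B ∈ C are joined by a finite sequence of types in C in which consecutive types are incident. In particular, for any two types A, B ∈ M the combinatorial convex hull M_{AB} is connected. -/
/-- A step from `j` to `k` along an edge of the comparability graph `Γ(A,B)`,
traversed in an allowed direction: there is `i` with `j ∈ A i`, `k ∈ B i`, `j ≠ k`
(such an edge is undirected precisely when moreover `j ∈ B i` and `k ∈ A i`, and then
the reversed step is also of this form). -/
def CompStep {n d : ℕ} (A B : Fin n → Finset (Fin d)) (j k : Fin d) : Prop :=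
  ∃ i, j ∈ A i ∧ k ∈ B i ∧ j ≠ k

/-- A traversal of a *directed* edge of `Γ(A,B)` in its given direction. -/
def CompDirStep {n d : ℕ} (A B : Fin n → Finset (Fin d)) (j k : Fin d) : Prop :=
  ∃ i, j ∈ A i ∧ k ∈ B i ∧ j ≠ k ∧ ¬ (j ∈ B i ∧ k ∈ A i)

/-- The comparability graph `Γ(A,B)` is acyclic: there is no closed walk consisting
of legally traversed edges at least one of which is directed. -/
def CompAcyclic {n d : ℕ} (A B : Fin n → Finset (Fin d)) : Prop :=
  ¬ ∃ j k : Fin d, CompDirStep A B j k ∧ Relation.ReflTransGen (CompStep A B) k j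

/-- An ordered partition of the ground set: a list of nonempty, pairwise disjoint
sets covering everything. -/
def IsOrderedPartition {α : Type*} [Fintype α] [DecidableEq α]
    (P : List (Finset α)) : Prop :=
  (∀ p ∈ P, p.Nonempty) ∧ P.Pairwise Disjoint ∧ P.foldr (· ∪ ·) ∅ = Finset.univ

/-- `refineEntry s P = s ∩ P_{m}` where `m` is the first index with `s ∩ P_m ≠ ∅`. -/
def refineEntry {α : Type*} [DecidableEq α] (s : Finset α) :
    List (Finset α) → Finset α
  | [] => ∅
  | p :: rest => if (s ∩ p).Nonempty then s ∩ p else refineEntry s rest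

/-- The refinement `A|_P` of a type `A` with respect to an ordered partition `P`. -/
def refineType {n d : ℕ} (A : Fin n → Finset (Fin d)) (P : List (Finset (Fin d))) :
    Fin n → Finset (Fin d) :=
  fun i => refineEntry (A i) P

/-- `M` is a tropical oriented matroid with parameters `(n,d)`. -/
def IsTOM (n d : ℕ) (M : Set (Fin n → Finset (Fin d))) : Prop :=
  (∀ A ∈ M, ∀ i, (A i).Nonempty) ∧
  (∀ j : Fin d, (fun _ : Fin n => ({j} : Finset (Fin d))) ∈ M) ∧
  (∀ A ∈ M, ∀ B ∈ M, CompAcyclic A B) ∧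
  (∀ A ∈ M, ∀ B ∈ M, ∀ j : Fin n, ∃ C ∈ M, C j = A j ∪ B j ∧
      ∀ k, C k = A k ∨ C k = B k ∨ C k = A k ∪ B k) ∧
  (∀ A ∈ M, ∀ P : List (Finset (Fin d)), IsOrderedPartition P → refineType A P ∈ M)

/-- The type graph `K_A`: the bipartite graph on `N_1,…,N_n,D_1,…,D_d` with an edge
`{N_i, D_j}` whenever `j ∈ A_i`. -/
def typeGraph {n d : ℕ} (A : Fin n → Finset (Fin d)) : SimpleGraph (Fin n ⊕ Fin d) :=
  SimpleGraph.fromRel (fun x y =>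
    match x, y with
    | Sum.inl i, Sum.inr j => j ∈ A i
    | _, _ => False)

/-- The dimension of a type: the number of connected components of `K_A` minus 1
(as an integer). -/
noncomputable def typeDim {n d : ℕ} (A : Fin n → Finset (Fin d)) : ℤ :=
  (Nat.card (typeGraph A).ConnectedComponent : ℤ) - 1

/-- A tropical oriented matroid is in general position if all its type graphs are
acyclic. -/
def InGeneralPosition {n d : ℕ} (M : Set (Fin n → Finset (Fin d))) : Prop :=
  ∀ A ∈ M, (typeGraph A).IsAcyclic

/-- Two types are incident if one is an entrywise subset of the other. -/
def Incident {n d : ℕ} (X Y : Fin n → Finset (Fin d)) : Prop :=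
  (∀ i, X i ⊆ Y i) ∨ (∀ i, Y i ⊆ X i)

/-- The combinatorial convex hull `M_{AB}` of two types within a collection `M`. -/
def Hull {n d : ℕ} (M : Set (Fin n → Finset (Fin d)))
    (A B : Fin n → Finset (Fin d)) : Set (Fin n → Finset (Fin d)) :=
  {C | C ∈ M ∧ ∀ i, C i = A i ∨ C i = B i ∨ C i = A i ∪ B i}

/-- `X` and `Y` are joined by a finite sequence of types in `S` in which consecutive
types are incident. -/
def ConnectedIn {n d : ℕ} (S : Set (Fin n → Finset (Fin d)))
    (X Y : Fin n → Finset (Fin d)) : Prop :=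
  Relation.ReflTransGen (fun U V => U ∈ S ∧ V ∈ S ∧ Incident U V) X Y

/-!
Walk from `A` to `B` by induction on the set of indices `i` at which `A i` and `B i` are
incomparable under inclusion. Eliminating between `A` and `B` at such an index gives a type `Z` of
the convex set with fewer incomparable indices to both `A` and `B`. When no incomparable index is
left, `A ⊓ B` has nonempty entries, each equal to `A i` or `B i`, and it is incident to `A` and `B`.
It is a type because it is a refinement of `A`: the number of nodes reachable in `Γ(A, B)` does not
increase along edges and, by acyclicity, drops along directed ones, so ordering the nodes by this
number gives an ordered partition in which the elements of `A i ∩ B i` come first within `A i`.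
-/

section OrderedPartition

variable {α β : Type*} [DecidableEq α]

theorem mem_foldr_union {x : α} {P : List (Finset α)} :
    x ∈ P.foldr (· ∪ ·) ∅ ↔ ∃ p ∈ P, x ∈ p := by
  induction P with
  | nil => simp
  | cons p P ih => simp [ih]

variable [Fintype α] [LinearOrder β]

theorem refineEntry_map_fiber (f : α → β) {s : Finset α} {x₀ : α} (hx₀ : x₀ ∈ s)
    (hmin : ∀ x ∈ s, f x₀ ≤ f x) {values : List β} (hsorted : values.Pairwise (· < ·))
    (hmem : f x₀ ∈ values) :
    refineEntry s (values.map fun b => Finset.univ.filter (f · = b)) = {x ∈ s | f x = f x₀} := by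
  induction values with
  | nil => simp at hmem
  | cons b values ih =>
    rw [List.pairwise_cons] at hsorted
    simp only [List.map_cons, refineEntry, Finset.inter_filter, Finset.inter_univ]
    rcases List.mem_cons.1 hmem with rfl | hmem
    · exact if_pos ⟨x₀, by simp [hx₀]⟩
    · have hlt : b < f x₀ := hsorted.1 _ hmem
      rw [if_neg, ih hsorted.2 hmem]
      rintro ⟨x, hx⟩
      obtain ⟨hxs, rfl⟩ := Finset.mem_filter.1 hx
      exact (hmin x hxs).not_gt hlt

/-- The ordered partition of `α` into the nonempty fibers of `f`, listed by increasing value. -/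
def fiberPartition (f : α → β) : List (Finset α) :=
  ((Finset.univ.image f).sort).map fun b => Finset.univ.filter (f · = b)

theorem isOrderedPartition_fiberPartition (f : α → β) :
    IsOrderedPartition (fiberPartition f) := by
  refine ⟨?nonempty, ?disjoint, ?cover⟩
  case nonempty =>
    intro p hp
    obtain ⟨b, hb, rfl⟩ := List.mem_map.1 hp
    obtain ⟨x, -, hx⟩ := Finset.mem_image.1 ((Finset.mem_sort _).1 hb)
    exact ⟨x, by simpa using hx⟩
  case disjoint =>
    refine List.pairwise_map.2 ((Finset.sort_nodup _ _).imp fun {b c} hbc => ?_)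
    exact Finset.disjoint_filter.2 fun x _ hxb hxc => hbc (hxb.symm.trans hxc)
  case cover =>
    refine Finset.eq_univ_of_forall fun x => mem_foldr_union.2 ?_
    exact ⟨_, List.mem_map.2 ⟨f x, by simp, rfl⟩, by simp⟩

theorem refineEntry_fiberPartition (f : α → β) {s : Finset α} {x₀ : α} (hx₀ : x₀ ∈ s)
    (hmin : ∀ x ∈ s, f x₀ ≤ f x) :
    refineEntry s (fiberPartition f) = {x ∈ s | f x = f x₀} :=
  refineEntry_map_fiber f hx₀ hmin (Finset.sortedLT_sort _).pairwise (by simp)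

end OrderedPartition

theorem exists_height_of_relation {α : Type*} [Finite α] (r : α → α → Prop) :
    ∃ height : α → ℕ, (∀ a b, r a b → height b ≤ height a) ∧
      ∀ a b, r a b → ¬ Relation.ReflTransGen r b a → height b < height a := by
  have reachable_subset {a b : α} (hab : r a b) :
      {c | Relation.ReflTransGen r b c} ⊆ {c | Relation.ReflTransGen r a c} :=
    fun c hbc => Relation.ReflTransGen.head hab hbc
  refine ⟨fun a => {c | Relation.ReflTransGen r a c}.ncard,
    fun a b hab => ?_, fun a b hab hba => ?_⟩
  · exact Set.ncard_le_ncard (reachable_subset hab)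
  · exact Set.ncard_lt_ncard
      ((Set.ssubset_iff_of_subset (reachable_subset hab)).2 ⟨a, Relation.ReflTransGen.refl, hba⟩)

section Types

variable {n d : ℕ} {M C : Set (Fin n → Finset (Fin d))} {A B : Fin n → Finset (Fin d)}

theorem CompDirStep.compStep {j k : Fin d} (h : CompDirStep A B j k) : CompStep A B j k :=
  let ⟨i, hj, hk, hne, _⟩ := h
  ⟨i, hj, hk, hne⟩

theorem CompAcyclic.exists_height (h : CompAcyclic A B) :
    ∃ height : Fin d → ℕ, (∀ j k, CompStep A B j k → height k ≤ height j) ∧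
      ∀ j k, CompDirStep A B j k → height k < height j := by
  obtain ⟨height, hle, hlt⟩ := exists_height_of_relation (CompStep A B)
  exact ⟨height, hle, fun j k hjk => hlt j k hjk.compStep fun hkj => h ⟨j, k, hjk, hkj⟩⟩

theorem CompAcyclic.exists_refineType_eq_inf (h : CompAcyclic A B)
    (hne : ∀ i, (A i ∩ B i).Nonempty) :
    ∃ P, IsOrderedPartition P ∧ refineType A P = A ⊓ B := by
  obtain ⟨height, hle, hlt⟩ := h.exists_height
  refine ⟨fiberPartition height, isOrderedPartition_fiberPartition height, funext fun i => ?_⟩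
  obtain ⟨x₀, hx₀⟩ := hne i
  obtain ⟨hx₀A, hx₀B⟩ := Finset.mem_inter.1 hx₀
  have le_of_mem {x y : Fin d} (hx : x ∈ A i) (hy : y ∈ B i) : height y ≤ height x := by
    rcases eq_or_ne x y with rfl | hxy
    · exact le_rfl
    · exact hle x y ⟨i, hx, hy, hxy⟩
  have lt_of_notMem {x : Fin d} (hx : x ∈ A i) (hxB : x ∉ B i) : height x₀ < height x :=
    hlt x x₀ ⟨i, hx, hx₀B, fun hxx₀ => hxB (hxx₀ ▸ hx₀B), fun hmem => hxB hmem.1⟩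
  calc refineEntry (A i) (fiberPartition height)
      = {x ∈ A i | height x = height x₀} :=
        refineEntry_fiberPartition height hx₀A fun x hx => le_of_mem hx hx₀B
    _ = A i ∩ B i := by
        ext x
        rw [Finset.mem_filter, Finset.mem_inter]
        refine and_congr_right fun hx => ⟨fun heq => ?_, fun hxB => ?_⟩
        · by_contra hxB
          exact (lt_of_notMem hx hxB).ne' heq
        · exact (le_of_mem hx₀A hxB).antisymm (le_of_mem hx hx₀B)

theorem inf_mem_hull (hne : ∀ A ∈ M, ∀ i, (A i).Nonempty)
    (hsurr : ∀ A ∈ M, ∀ P, IsOrderedPartition P → refineType A P ∈ M)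
    (hA : A ∈ M) (hB : B ∈ M) (hacyc : CompAcyclic A B)
    (hcomp : ∀ i, A i ⊆ B i ∨ B i ⊆ A i) : A ⊓ B ∈ Hull M A B := by
  have inf_eq (i : Fin n) : A i ∩ B i = A i ∨ A i ∩ B i = B i :=
    (hcomp i).imp Finset.inter_eq_left.2 Finset.inter_eq_right.2
  have inf_nonempty (i : Fin n) : (A i ∩ B i).Nonempty := by
    rcases inf_eq i with h | h <;> rw [h]
    exacts [hne A hA i, hne B hB i]
  obtain ⟨P, hP, hAP⟩ := hacyc.exists_refineType_eq_inf inf_nonempty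
  exact ⟨hAP ▸ hsurr A hA P hP, fun i => (inf_eq i).imp_right Or.inl⟩

theorem connectedIn_of_inf_mem (hA : A ∈ C) (hB : B ∈ C) (hinf : A ⊓ B ∈ C) :
    ConnectedIn C A B :=
  .head ⟨hA, hinf, .inr fun _ => Finset.inter_subset_left⟩
    (.single ⟨hinf, hB, .inl fun _ => Finset.inter_subset_right⟩)

end Types

section IncomparableIndices

variable {ι α : Type*}

/-- The set of indices at which two families are incomparable. It is the quantity that decreases
along the walk between two types. -/
def incomparableIndices [LE α] (A B : ι → α) : Set ι :=
  {i | IncompRel (· ≤ ·) (A i) (B i)}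

theorem incomparableIndices_comm [LE α] (A B : ι → α) :
    incomparableIndices A B = incomparableIndices B A :=
  Set.ext fun _ => incompRel_comm

theorem incomparableIndices_ssubset [SemilatticeSup α] {A B Z : ι → α} {j : ι}
    (hj : j ∈ incomparableIndices A B) (hZj : Z j = A j ⊔ B j)
    (hZ : ∀ i, Z i = A i ∨ Z i = B i ∨ Z i = A i ⊔ B i) :
    incomparableIndices A Z ⊂ incomparableIndices A B := by
  refine (Set.ssubset_iff_of_subset fun i hi => ?_).2 ⟨j, hj, fun hjZ => hjZ.1 (hZj ▸ le_sup_left)⟩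
  rcases hZ i with hZi | hZi | hZi
  · exact absurd hZi.ge hi.1
  · rwa [incomparableIndices, Set.mem_ofPred_eq, hZi] at hi
  · exact absurd (hZi ▸ le_sup_left) hi.1

end IncomparableIndices

section Convex

variable {n d : ℕ} {M C : Set (Fin n → Finset (Fin d))}

/-- Convexity of a collection `C` of types relative to an ambient collection `M`: `C` contains the
combinatorial convex hull, taken in `M`, of any two of its members. -/
def IsConvexIn (M C : Set (Fin n → Finset (Fin d))) : Prop :=
  ∀ A ∈ C, ∀ B ∈ C, Hull M A B ⊆ C

theorem isConvexIn_hull (M : Set (Fin n → Finset (Fin d))) (A B : Fin n → Finset (Fin d)) :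
    IsConvexIn M (Hull M A B) := by
  rintro U ⟨-, hU⟩ V ⟨-, hV⟩ Z ⟨hZM, hZ⟩
  refine ⟨hZM, fun i => ?_⟩
  rcases hZ i with hZi | hZi | hZi <;> rw [hZi]
  · exact hU i
  · exact hV i
  · rcases hU i with hUi | hUi | hUi <;> rcases hV i with hVi | hVi | hVi <;> rw [hUi, hVi] <;>
      simp [Finset.union_comm]

theorem IsConvexIn.connectedIn (hconv : IsConvexIn M C) (hCM : C ⊆ M)
    (hne : ∀ A ∈ M, ∀ i, (A i).Nonempty)
    (hacyc : ∀ A ∈ M, ∀ B ∈ M, CompAcyclic A B)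
    (helim : ∀ A ∈ M, ∀ B ∈ M, ∀ j, ∃ Z ∈ M, Z j = A j ∪ B j ∧
      ∀ k, Z k = A k ∨ Z k = B k ∨ Z k = A k ∪ B k)
    (hsurr : ∀ A ∈ M, ∀ P, IsOrderedPartition P → refineType A P ∈ M)
    {A B : Fin n → Finset (Fin d)} (hA : A ∈ C) (hB : B ∈ C) : ConnectedIn C A B := by
  induction hI : incomparableIndices A B using WellFoundedLT.induction generalizing A B with
  | ind I ih =>
    subst hI
    rcases (incomparableIndices A B).eq_empty_or_nonempty with hempty | ⟨j, hj⟩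
    · have hcomp (i : Fin n) : A i ⊆ B i ∨ B i ⊆ A i :=
        not_incompRel_iff_symmGen.1 (Set.eq_empty_iff_forall_notMem.1 hempty i)
      exact connectedIn_of_inf_mem hA hB (hconv A hA B hB
        (inf_mem_hull hne hsurr (hCM hA) (hCM hB) (hacyc A (hCM hA) B (hCM hB)) hcomp))
    · obtain ⟨Z, hZM, hZj, hZ⟩ := helim A (hCM hA) B (hCM hB) j
      have hZC : Z ∈ C := hconv A hA B hB ⟨hZM, hZ⟩
      have hAZ : incomparableIndices A Z ⊂ incomparableIndices A B :=
        incomparableIndices_ssubset hj hZj hZ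
      have hZB : incomparableIndices Z B ⊂ incomparableIndices A B := by
        simp only [Finset.union_comm (A _)] at hZj hZ
        rw [incomparableIndices_comm A] at hj ⊢
        rw [incomparableIndices_comm Z]
        exact incomparableIndices_ssubset hj hZj fun i => or_left_comm.1 (hZ i)
      exact (ih _ hAZ hA hZC rfl).trans (ih _ hZB hZC hB rfl)

end Convex

theorem stmt_2_general {n d : ℕ} (M : Set (Fin n → Finset (Fin d)))
    (hne : ∀ A ∈ M, ∀ i, (A i).Nonempty)
    (hacyc : ∀ A ∈ M, ∀ B ∈ M, CompAcyclic A B)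
    (helim : ∀ A ∈ M, ∀ B ∈ M, ∀ j, ∃ Z ∈ M, Z j = A j ∪ B j ∧
      ∀ k, Z k = A k ∨ Z k = B k ∨ Z k = A k ∪ B k)
    (hsurr : ∀ A ∈ M, ∀ P, IsOrderedPartition P → refineType A P ∈ M) :
    (∀ C ⊆ M, IsConvexIn M C → ∀ A ∈ C, ∀ B ∈ C, ConnectedIn C A B) ∧
    (∀ A B, ∀ X ∈ Hull M A B, ∀ Y ∈ Hull M A B, ConnectedIn (Hull M A B) X Y) :=
  ⟨fun _ hCM hconv _ hA _ hB => hconv.connectedIn hCM hne hacyc helim hsurr hA hB,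
    fun A B _ hX _ hY =>
      (isConvexIn_hull M A B).connectedIn (fun _ h => h.1) hne hacyc helim hsurr hX hY⟩

theorem stmt_2 {n d : ℕ} (M : Set (Fin n → Finset (Fin d))) (hM : IsTOM n d M)
    (C : Set (Fin n → Finset (Fin d))) (hCM : C ⊆ M)
    (hconv : ∀ A ∈ C, ∀ B ∈ C, Hull M A B ⊆ C) :
    (∀ A ∈ C, ∀ B ∈ C, ConnectedIn C A B) ∧
    (∀ A ∈ M, ∀ B ∈ M, ∀ X ∈ Hull M A B, ∀ Y ∈ Hull M A B,
      ConnectedIn (Hull M A B) X Y) := by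
  have hgeneral := stmt_2_general M hM.1 hM.2.2.1 hM.2.2.2.1 hM.2.2.2.2
  exact ⟨hgeneral.1 C hCM hconv, fun A _ B _ => hgeneral.2 A B⟩
end

section
/- Let A be an (n,d)-type whose type graph K_A is acyclic, and let B be an (n,d)-type with B_i ⊆ A_i for every i ∈ [n]. Then there exists an ordered partition P of [d] such that B = A|_P, the refinement of A with respect to P. Consequently, if M is a tropical oriented matroid in general position and A ∈ M, then every (n,d)-type B with B_i ⊆ A_i for all i belongs to M. -/
/-!
On an acyclic graph, differences along edges can be prescribed arbitrarily: sum them along the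
unique path from a chosen root of each component. Applied to `K_A`, this gives heights `h j` of the
vertices `D_j` and levels `c i` of the vertices `N_i` with `h j = c i` for `j ∈ B_i` and
`h j = c i + 1` for `j ∈ A_i \ B_i`. Hence `B_i` is the set of minimizers of `h` on `A_i`, which is
what the partition of `[d]` into level sets of `h`, in increasing order, cuts out of `A_i`.
-/

section Potential

variable {V R : Type*} {G : SimpleGraph V}

/-- The total weight of a walk whose step from `x` to `y` weighs `w x y`; along paths from a fixed
root it serves as a potential with differences `w`. The summands keep the order of the walk, so
`R` need not be commutative. -/
def walkWeight [AddMonoid R] (w : V → V → R) {u v : V} (p : G.Walk u v) : R :=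
  (p.darts.map fun e => w e.fst e.snd).sum

theorem walkWeight_concat [AddMonoid R] (w : V → V → R) {u x y : V} (p : G.Walk u x)
    (hxy : G.Adj x y) : walkWeight w (p.concat hxy) = walkWeight w p + w x y := by
  simp [walkWeight, SimpleGraph.Walk.darts_concat]

theorem walkWeight_copy [AddMonoid R] (w : V → V → R) {u v u' v' : V} (p : G.Walk u v)
    (hu : u = u') (hv : v = v') : walkWeight w (p.copy hu hv) = walkWeight w p := by
  simp [walkWeight]

theorem walkWeight_eq_add_of_adj [AddGroup R] (hG : G.IsAcyclic) {w : V → V → R}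
    (hw : ∀ x y, G.Adj x y → w y x = -w x y) {u x y : V} {p : G.Walk u x} {q : G.Walk u y}
    (hp : p.IsPath) (hq : q.IsPath) (hxy : G.Adj x y) :
    walkWeight w q = walkWeight w p + w x y := by
  by_cases hx : x ∈ q.support
  · rw [hG.path_concat hp hq hxy hx, walkWeight_concat]
  · have hy : y ∈ p.support := hG.mem_support_of_ne_mem_support_of_adj_of_isPath hp hq hxy hx
    rw [hG.path_concat hq hp hxy.symm hy, walkWeight_concat, hw x y hxy, neg_add_cancel_right]

theorem exists_potential_of_isAcyclic [AddGroup R] (hG : G.IsAcyclic) {w : V → V → R}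
    (hw : ∀ x y, G.Adj x y → w y x = -w x y) :
    ∃ φ : V → R, ∀ x y, G.Adj x y → φ y = φ x + w x y := by
  let root (x : V) : V := (G.connectedComponentMk x).out
  have root_reachable (x : V) : G.Reachable (root x) x :=
    SimpleGraph.ConnectedComponent.exact (G.connectedComponentMk x).out_eq
  choose path path_isPath using fun x => (root_reachable x).exists_isPath
  refine ⟨fun x => walkWeight w (path x), fun x y hxy => ?_⟩
  have root_eq : root y = root x :=
    congrArg Quot.out (SimpleGraph.ConnectedComponent.sound hxy.symm.reachable)
  have copy_isPath : ((path y).copy root_eq rfl).IsPath := by simpa using path_isPath y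
  simpa only [walkWeight_copy] using
    walkWeight_eq_add_of_adj hG hw (path_isPath x) copy_isPath hxy

end Potential

section LevelPartition

variable {α β : Type*} [Fintype α] [LinearOrder β]

/-- The ordered partition of a finite type into the nonempty level sets of `h`, in increasing order
of the value of `h`; refining a nonempty set by it leaves the minimizers of `h` on that set. -/
def levelPartition (h : α → β) : List (Finset α) :=
  (Finset.univ.image h).sort.map fun v => ({j | h j = v} : Finset α)

theorem isOrderedPartition_levelPartition [DecidableEq α] (h : α → β) :
    IsOrderedPartition (levelPartition h) := by
  refine ⟨?_, ?_, ?_⟩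
  · simp [levelPartition, Finset.filter_nonempty_iff]
  · refine List.pairwise_map.2 ((Finset.sortedLT_sort _).pairwise.imp fun hab => ?_)
    exact Finset.disjoint_filter.2 fun j _ hja hjb => hab.ne (hja.symm.trans hjb)
  · change (levelPartition h).foldr (· ⊔ ·) ⊥ = Finset.univ
    rw [List.foldr_sup_eq_sup_toFinset]
    ext j
    simp [levelPartition, Finset.mem_sup]

theorem refineEntry_map_level [DecidableEq α] {h : α → β} {s : Finset α} {m : β}
    (hm : IsLeast (h '' s) m) {L : List β} (hL : L.Pairwise (· < ·)) (hmL : m ∈ L) :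
    refineEntry s (L.map fun v => ({j | h j = v} : Finset α)) = {j ∈ s | h j = m} := by
  induction L with
  | nil => simp at hmL
  | cons v L ih =>
    obtain ⟨hvL, hL⟩ := List.pairwise_cons.1 hL
    have inter_level : s ∩ ({j | h j = v} : Finset α) = {j ∈ s | h j = v} := by
      rw [Finset.inter_filter, Finset.inter_univ]
    rw [List.map_cons, refineEntry, inter_level]
    rcases List.mem_cons.1 hmL with rfl | m_mem_tail
    · obtain ⟨j, hj, hjm⟩ := hm.1
      exact if_pos ⟨j, Finset.mem_filter.2 ⟨hj, hjm⟩⟩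
    · have level_empty : ¬ ({j ∈ s | h j = v} : Finset α).Nonempty := by
        rintro ⟨j, hj⟩
        obtain ⟨hjs, rfl⟩ := Finset.mem_filter.1 hj
        exact (hvL m m_mem_tail).not_ge (hm.2 ⟨j, hjs, rfl⟩)
      rw [if_neg level_empty, ih hL m_mem_tail]

theorem refineEntry_levelPartition [DecidableEq α] {h : α → β} {s : Finset α} {m : β}
    (hm : IsLeast (h '' s) m) : refineEntry s (levelPartition h) = {j ∈ s | h j = m} := by
  have m_mem : m ∈ (Finset.univ.image h).sort := by
    obtain ⟨j, -, rfl⟩ := hm.1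
    simp
  exact refineEntry_map_level hm (Finset.sortedLT_sort _).pairwise m_mem

end LevelPartition

section TypeRefinement

variable {n d : ℕ} {A B : Fin n → Finset (Fin d)}

theorem typeGraph_adj_inl_inr {i : Fin n} {j : Fin d} :
    (typeGraph A).Adj (Sum.inl i) (Sum.inr j) ↔ j ∈ A i := by
  simp [typeGraph]

theorem exists_height_of_isAcyclic_typeGraph {R : Type*} [AddGroup R]
    (hA : (typeGraph A).IsAcyclic) (f : Fin n → Fin d → R) :
    ∃ (c : Fin n → R) (h : Fin d → R), ∀ i, ∀ j ∈ A i, h j = c i + f i j := by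
  let w : Fin n ⊕ Fin d → Fin n ⊕ Fin d → R
    | .inl i, .inr j => f i j
    | .inr j, .inl i => -f i j
    | _, _ => 0
  have w_antisymm : ∀ x y, w y x = -w x y := by
    rintro (i | j) (i' | j') <;> simp [w]
  obtain ⟨φ, hφ⟩ := exists_potential_of_isAcyclic hA fun x y _ => w_antisymm x y
  exact ⟨fun i => φ (.inl i), fun j => φ (.inr j),
    fun i j hj => hφ (.inl i) (.inr j) (typeGraph_adj_inl_inr.2 hj)⟩

theorem exists_isOrderedPartition_eq_refineType (hA : (typeGraph A).IsAcyclic)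
    (hB : ∀ i, (B i).Nonempty) (hBA : ∀ i, B i ⊆ A i) :
    ∃ P : List (Finset (Fin d)), IsOrderedPartition P ∧ B = refineType A P := by
  obtain ⟨c, h, height_eq⟩ :=
    exists_height_of_isAcyclic_typeGraph hA fun i j => if j ∈ B i then (0 : ℤ) else 1
  have le_height : ∀ i, ∀ j ∈ A i, c i ≤ h j := fun i j hj => by
    rw [height_eq i j hj]
    split_ifs <;> simp
  have height_eq_iff : ∀ i, ∀ j ∈ A i, (h j = c i ↔ j ∈ B i) := fun i j hj => by
    simp [height_eq i j hj]
  have isLeast_level (i : Fin n) : IsLeast (h '' A i) (c i) := by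
    obtain ⟨b, hb⟩ := hB i
    exact ⟨⟨b, hBA i hb, (height_eq_iff i b (hBA i hb)).2 hb⟩,
      Set.forall_mem_image.2 (le_height i)⟩
  refine ⟨levelPartition h, isOrderedPartition_levelPartition h, funext fun i => ?_⟩
  calc B i = {j ∈ A i | j ∈ B i} := by
        rw [Finset.filter_mem_eq_inter, Finset.inter_eq_right.2 (hBA i)]
    _ = {j ∈ A i | h j = c i} := Finset.filter_congr fun j hj => (height_eq_iff i j hj).symm
    _ = refineType A (levelPartition h) i := (refineEntry_levelPartition (isLeast_level i)).symm

theorem IsTOM.refineType_mem {M : Set (Fin n → Finset (Fin d))} (hM : IsTOM n d M) (hA : A ∈ M)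
    {P : List (Finset (Fin d))} (hP : IsOrderedPartition P) : refineType A P ∈ M :=
  hM.2.2.2.2 A hA P hP

end TypeRefinement

theorem stmt_3 {n d : ℕ} (hn : 1 ≤ n) (hd : 1 ≤ d) :
    (∀ A B : Fin n → Finset (Fin d),
      (∀ i, (A i).Nonempty) → (typeGraph A).IsAcyclic →
      (∀ i, (B i).Nonempty) → (∀ i, B i ⊆ A i) →
      ∃ P : List (Finset (Fin d)), IsOrderedPartition P ∧ B = refineType A P) ∧
    (∀ M : Set (Fin n → Finset (Fin d)), IsTOM n d M → InGeneralPosition M →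
      ∀ A ∈ M, ∀ B : Fin n → Finset (Fin d),
        (∀ i, (B i).Nonempty) → (∀ i, B i ⊆ A i) → B ∈ M) := by
  refine ⟨fun A B _ hA hB hBA => exists_isOrderedPartition_eq_refineType hA hB hBA, ?_⟩
  intro M hM hgen A hAM B hB hBA
  obtain ⟨P, hP, rfl⟩ := exists_isOrderedPartition_eq_refineType (hgen A hAM) hB hBA
  exact hM.refineType_mem hAM hP
end
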